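/- B(P_4 □ P_4) = 5, i.e., the 4 × 4 grid graph has bodyguard number 5. -/

import Mathlib

open SimpleGraph

/-- A token may stay in place or move along an edge. -/
def stepRel {V : Type*} (G : SimpleGraph V) (x y : V) : Prop := x = y ∨ G.Adj x y

/-- The sequence of positions in the pursuit game: `(gamePlay ...) n` is the pair
(pursuer positions, evader position) after `n` full rounds; at time `0` the pursuers
have been placed (`binit`) and then the evader placed (`pinit binit`). In each round,
the pursuers move first (via `bmove`, seeing the current state), then the evader moves
(via `pmove`, seeing the pursuers' new positions and his own position). -/
def gamePlay {V : Type*} {k : ℕ} (binit : Fin k → V) (bmove : (Fin k → V) → V → Fin k → V)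
    (pinit : (Fin k → V) → V) (pmove : (Fin k → V) → V → V) : ℕ → (Fin k → V) × V
  | 0 => (binit, pinit binit)
  | n + 1 =>
      let s := gamePlay binit bmove pinit pmove n
      (bmove s.1 s.2, pmove (bmove s.1 s.2) s.2)

/-- `k` bodyguards have a winning strategy on `G`: they can place themselves and move so
that, against every president strategy, after finitely many rounds they occupy the whole
open neighbourhood of the president's vertex at the end of every bodyguard turn. -/
def BodyguardsWin {V : Type*} (G : SimpleGraph V) (k : ℕ) : Prop :=
  ∃ (binit : Fin k → V) (bmove : (Fin k → V) → V → Fin k → V),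
    (∀ bs p i, stepRel G (bs i) (bmove bs p i)) ∧
    ∀ (pinit : (Fin k → V) → V) (pmove : (Fin k → V) → V → V),
      (∀ bs p, stepRel G p (pmove bs p)) →
      ∃ N, ∀ n, N ≤ n →
        ∀ v, G.Adj (gamePlay binit bmove pinit pmove n).2 v →
          ∃ i, (gamePlay binit bmove pinit pmove (n + 1)).1 i = v

/-- The bodyguard number of a finite graph. -/
noncomputable def bodyguardNumber {V : Type*} (G : SimpleGraph V) [Fintype V] : ℕ :=
  sInf {k | BodyguardsWin G k}

/-- `k` cops have a winning strategy in classic Cops and Robber on `G`: at some point a cop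
occupies the same vertex as the robber (either right after a cop move, or at the end of a
round). -/
def CopsWin {V : Type*} (G : SimpleGraph V) (k : ℕ) : Prop :=
  ∃ (cinit : Fin k → V) (cmove : (Fin k → V) → V → Fin k → V),
    (∀ cs r i, stepRel G (cs i) (cmove cs r i)) ∧
    ∀ (rinit : (Fin k → V) → V) (rmove : (Fin k → V) → V → V),
      (∀ cs r, stepRel G r (rmove cs r)) →
      ∃ n i, (gamePlay cinit cmove rinit rmove (n + 1)).1 i =
                (gamePlay cinit cmove rinit rmove n).2 ∨
             (gamePlay cinit cmove rinit rmove n).1 i =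
                (gamePlay cinit cmove rinit rmove n).2

/-- The cop number of a finite graph. -/
noncomputable def copNumber {V : Type*} (G : SimpleGraph V) [Fintype V] : ℕ :=
  sInf {k | CopsWin G k}

/-- The guards at `bs` occupy the whole open neighbourhood of `p`. -/
def Surrounds {V : Type*} (G : SimpleGraph V) {k : ℕ} (bs : Fin k → V) (p : V) : Prop :=
  ∀ v, G.Adj p v → ∃ i, bs i = v

/-- The guards at `bs` can surround `p` with a single move. -/
def CanSurround {V : Type*} (G : SimpleGraph V) {k : ℕ} (bs : Fin k → V) (p : V) : Prop :=
  ∃ bs' : Fin k → V, (∀ i, stepRel G (bs i) (bs' i)) ∧ Surrounds G bs' p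

/-- The president wins if he can always move, within a region `P`, to a vertex where he cannot be
surrounded at once. -/
lemma not_bodyguardsWin_of_evasion {V : Type*} {G : SimpleGraph V} {k : ℕ} (P : V → Prop)
    (h_start : ∀ bs : Fin k → V, ∃ p, P p ∧ ¬ CanSurround G bs p)
    (h_move : ∀ (bs : Fin k → V) p, P p → ¬ Surrounds G bs p →
      ∃ p', stepRel G p p' ∧ P p' ∧ ¬ CanSurround G bs p') :
    ¬ BodyguardsWin G k := by
  rintro ⟨binit, bmove, hb, hwin⟩
  have h_total : ∀ (bs : Fin k → V) p, ∃ p', stepRel G p p' ∧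
      (P p → ¬ Surrounds G bs p → P p' ∧ ¬ CanSurround G bs p') := by
    intro bs p
    by_cases h : P p ∧ ¬ Surrounds G bs p
    · obtain ⟨p', h1, h2⟩ := h_move bs p h.1 h.2
      exact ⟨p', h1, fun _ _ => h2⟩
    · exact ⟨p, Or.inl rfl, fun h1 h2 => absurd ⟨h1, h2⟩ h⟩
  choose pinit hpinit using h_start
  choose pmove hstep hpmove using h_total
  have inv : ∀ n, P (gamePlay binit bmove pinit pmove n).2 ∧
      ¬ CanSurround G (gamePlay binit bmove pinit pmove n).1
        (gamePlay binit bmove pinit pmove n).2 := by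
    intro n
    induction n with
    | zero => exact hpinit binit
    | succ n ih => exact hpmove _ _ ih.1 fun h => ih.2 ⟨_, hb _ _, h⟩
  obtain ⟨N, hN⟩ := hwin pinit pmove hstep
  exact (inv N).2 ⟨_, hb _ _, hN N le_rfl⟩

/-- The guards win if they can steadily decrease a rank, of the positions at the end of their turn,
down to `0`, and keep it there, where rank `0` means that the president is surrounded. -/
lemma bodyguardsWin_of_rank {V : Type*} [Nonempty V] {G : SimpleGraph V} {k : ℕ}
    (R : ℕ → (Fin k → V) → V → Prop) (h_total : ∀ bs p, ∃ n, R n bs p)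
    (h_zero : ∀ bs p, R 0 bs p → Surrounds G bs p)
    (h_move : ∀ n bs p p', R n bs p → stepRel G p p' →
      ∃ bs' : Fin k → V, (∀ i, stepRel G (bs i) (bs' i)) ∧ ∃ m, (m < n ∨ m = 0) ∧ R m bs' p') :
    BodyguardsWin G k := by
  classical
  let ρ : (Fin k → V) → V → ℕ := fun bs p => Nat.find (h_total bs p)
  have h_best : ∀ (bs : Fin k → V) p', ∃ bs' : Fin k → V, (∀ i, stepRel G (bs i) (bs' i)) ∧
      ∀ cs : Fin k → V, (∀ i, stepRel G (bs i) (cs i)) → ρ bs' p' ≤ ρ cs p' := by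
    intro bs p'
    have hne : {cs : Fin k → V | ∀ i, stepRel G (bs i) (cs i)}.Nonempty :=
      ⟨bs, fun _ => Or.inl rfl⟩
    refine ⟨Function.argminOn (fun cs => ρ cs p') _ hne, Function.argminOn_mem _ _ hne, ?_⟩
    intro cs hcs
    exact Function.argminOn_le (fun cs => ρ cs p') {cs | ∀ i, stepRel G (bs i) (cs i)} hcs
  choose bmove hb hbest using h_best
  have h_dec : ∀ bs p p', stepRel G p p' →
      ρ (bmove bs p') p' < ρ bs p ∨ ρ (bmove bs p') p' = 0 := by
    intro bs p p' hp
    obtain ⟨cs, hcs, m, hm, hR⟩ := h_move _ bs p p' (Nat.find_spec (h_total bs p)) hp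
    have h1 : ρ (bmove bs p') p' ≤ ρ cs p' := hbest bs p' cs hcs
    have h2 : ρ cs p' ≤ m := Nat.find_min' _ hR
    have h3 : m < ρ bs p ∨ m = 0 := hm
    omega
  refine ⟨fun _ => Classical.arbitrary V, bmove, hb, fun pinit pmove hp => ?_⟩
  set g := gamePlay (fun _ => Classical.arbitrary V) bmove pinit pmove with hg
  have h_bound : ∀ n, ρ (g (n + 1)).1 (g n).2 ≤ ρ (g 1).1 (g 0).2 - n := by
    intro n
    induction n with
    | zero => simp
    | succ n ih =>
      have h1 : ρ (g (n + 2)).1 (g (n + 1)).2 < ρ (g (n + 1)).1 (g n).2 ∨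
          ρ (g (n + 2)).1 (g (n + 1)).2 = 0 := h_dec _ _ _ (hp _ _)
      have h2 : n + 1 + 1 = n + 2 := rfl
      rw [h2]
      omega
  refine ⟨ρ (g 1).1 (g 0).2, fun n hn => h_zero _ _ ?_⟩
  have h1 := h_bound n
  have h2 : ρ (g (n + 1)).1 (g n).2 = 0 := by omega
  have h3 : R (ρ (g (n + 1)).1 (g n).2) (g (n + 1)).1 (g n).2 := Nat.find_spec (h_total _ _)
  rwa [h2] at h3

namespace Grid

/-- The vertices of the `4 × 4` grid. -/
abbrev Vertex := Fin 4 × Fin 4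

/-- The `4 × 4` grid graph. -/
abbrev grid : SimpleGraph Vertex := pathGraph 4 □ pathGraph 4

/-- The successor, truncated at the end of the path. -/
def up (a : Fin 4) : Fin 4 := ![1, 2, 3, 3] a

/-- The predecessor, truncated at the start of the path. -/
def down (a : Fin 4) : Fin 4 := ![0, 0, 1, 2] a

/-- The four truncated translates of a vertex. -/
def shadow (i : Fin 4) (p : Vertex) : Vertex :=
  ![(up p.1, p.2), (down p.1, p.2), (p.1, up p.2), (p.1, down p.2)] i

/-- A decidable form of `stepRel grid`. -/
def Near (p q : Vertex) : Prop :=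
  (p.1 = q.1 ∧ (p.2 = q.2 ∨ up p.2 = q.2 ∨ down p.2 = q.2)) ∨
    (p.2 = q.2 ∧ (up p.1 = q.1 ∨ down p.1 = q.1))

instance : DecidableRel Near := fun _ _ => inferInstanceAs (Decidable (_ ∨ _))

lemma stepRel_iff_near {p q : Vertex} : stepRel grid p q ↔ Near p q := by
  have h_path : ∀ a b : Fin 4, (pathGraph 4).Adj a b ↔ a ≠ b ∧ (up a = b ∨ down a = b) := by
    simp only [pathGraph_adj]
    decide
  obtain ⟨a, b⟩ := p
  obtain ⟨c, d⟩ := q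
  simp only [stepRel, boxProd_adj, h_path, Near, Prod.mk.injEq]
  tauto

lemma near_refl : ∀ p, Near p p := fun _ => Or.inl ⟨rfl, Or.inl rfl⟩

lemma near_shadow : ∀ i p q, Near p q → Near (shadow i p) (shadow i q) := by decide +kernel

lemma exists_shadow_eq {p v : Vertex} (h : grid.Adj p v) : ∃ i, shadow i p = v := by
  have h_near : ∀ p v, Near p v → p ≠ v → ∃ i, shadow i p = v := by decide +kernel
  exact h_near p v (stepRel_iff_near.1 (Or.inr h)) h.ne

/-- One step from `a` towards `x`. -/
def toward (a x : Fin 4) : Fin 4 := if a < x then up a else if x < a then down a else a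

/-- The distance from `a` to the end of the path lying behind `x`. -/
def room (a x : Fin 4) : ℕ := if a < x then 3 - a else if x < a then a else 0

/-- A pursuer at `c` first aligns the first coordinate with that of `t`, then the second. -/
def chase (c t : Vertex) : Vertex :=
  if c.1 = t.1 then (c.1, toward c.2 t.2) else (toward c.1 t.1, c.2)

/-- A bound on the remaining number of moves of the chase in which the target does not change its
first coordinate. -/
def chaseRank (c t : Vertex) : ℕ :=
  if c.1 = t.1 then room c.2 t.2 else 4 + room c.1 t.1

lemma chaseRank_le : ∀ c t, chaseRank c t ≤ 7 := by decide +kernel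

lemma chaseRank_eq_zero : ∀ c t, chaseRank c t = 0 → c = t := by decide +kernel

lemma near_chase : ∀ c t, Near c (chase c t) := by decide +kernel

lemma chaseRank_chase : ∀ c t t', Near t t' → chaseRank (chase c t') t' ≤ chaseRank c t ∧
    (t.1 = t'.1 → chaseRank (chase c t') t' = 0 ∨
      chaseRank (chase c t') t' < chaseRank c t) := by
  decide +kernel

lemma near_swap : ∀ p q : Vertex, Near p q → Near p.swap q.swap := by decide +kernel

lemma fst_eq_or_snd_eq_of_near {p q : Vertex} (h : Near p q) : p.1 = q.1 ∨ p.2 = q.2 :=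
  h.imp And.left And.left

/-- Two pursuers, one aligning the first coordinate and one the second, make progress together. -/
lemma chaseRank_pair {c d t t' : Vertex} (h : Near t t') :
    chase c t' = t' ∨ (chase d.swap t'.swap).swap = t' ∨
      chaseRank (chase c t') t' + chaseRank (chase d.swap t'.swap) t'.swap <
        chaseRank c t + chaseRank d.swap t.swap := by
  have hc := chaseRank_chase c t t' h
  have hd := chaseRank_chase d.swap t.swap t'.swap (near_swap _ _ h)
  by_cases hc0 : chaseRank (chase c t') t' = 0
  · exact Or.inl (chaseRank_eq_zero _ _ hc0)
  by_cases hd0 : chaseRank (chase d.swap t'.swap) t'.swap = 0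
  · refine Or.inr (Or.inl ?_)
    rw [chaseRank_eq_zero _ _ hd0, Prod.swap_swap]
  refine Or.inr (Or.inr ?_)
  rcases fst_eq_or_snd_eq_of_near h with h1 | h1
  · have := hc.2 h1
    omega
  · have := hd.2 h1
    omega

/-- The first `j` guards stand on the first `j` shadows of `p`; guard `j` and guard `4` chase the
next shadow. -/
def Holds (n : ℕ) (b : Fin 5 → Vertex) (p : Vertex) : Prop :=
  ∃ j : ℕ, (∀ i : Fin 4, (i : ℕ) < j → b i.castSucc = shadow i p) ∧
    ((j = 4 ∧ n = 0) ∨ ∃ t : Fin 4, (t : ℕ) = j ∧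
      n = 15 * (4 - j) + (chaseRank (b t.castSucc) (shadow t p) +
        chaseRank (b 4).swap (shadow t p).swap))

lemma exists_holds {j : ℕ} (hj : j ≤ 4) {b : Fin 5 → Vertex} {p : Vertex}
    (h : ∀ i : Fin 4, (i : ℕ) < j → b i.castSucc = shadow i p) :
    ∃ n, n ≤ 15 * (4 - j) + 14 ∧ Holds n b p := by
  rcases hj.eq_or_lt with rfl | hj
  · exact ⟨0, by omega, 4, h, Or.inl ⟨rfl, rfl⟩⟩
  · refine ⟨_, ?_, j, h, Or.inr ⟨⟨j, hj⟩, rfl, rfl⟩⟩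
    have h1 := chaseRank_le (b (Fin.castSucc ⟨j, hj⟩)) (shadow ⟨j, hj⟩ p)
    have h2 := chaseRank_le (b 4).swap (shadow ⟨j, hj⟩ p).swap
    omega

lemma Holds.move {n : ℕ} {b : Fin 5 → Vertex} {p p' : Vertex} (h : Holds n b p)
    (hp : Near p p') :
    ∃ b' : Fin 5 → Vertex, (∀ i, Near (b i) (b' i)) ∧
      ∃ (σ : Equiv.Perm (Fin 5)) (m : ℕ), (m < n ∨ m = 0) ∧ Holds m (b' ∘ σ) p' := by
  obtain ⟨j, hj, ⟨rfl, rfl⟩ | ⟨t, rfl, rfl⟩⟩ := h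
  · refine ⟨Fin.snoc (fun i => shadow i p') (b (Fin.last 4)), fun i => ?_, 1, 0, Or.inr rfl, 4,
      fun i _ => by simp, Or.inl ⟨rfl, rfl⟩⟩
    induction i using Fin.lastCases with
    | last =>
      rw [Fin.snoc_last]
      exact near_refl _
    | cast i => simpa [hj i i.2] using near_shadow i p p' hp
  · have ht : Near (shadow t p) (shadow t p') := near_shadow t p p' hp
    let b' : Fin 5 → Vertex := Fin.snoc
      (fun i : Fin 4 => if i < t then shadow i p' else if i = t then
        chase (b t.castSucc) (shadow t p') else b i.castSucc)
      (chase (b 4).swap (shadow t p').swap).swap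
    have hb_lt : ∀ i : Fin 4, i < t → b' i.castSucc = shadow i p' := fun i hi => by
      simp [b', hi]
    have hb_t : b' t.castSucc = chase (b t.castSucc) (shadow t p') := by simp [b']
    have hb_last : b' 4 = (chase (b 4).swap (shadow t p').swap).swap :=
      Fin.snoc_last (α := fun _ => Vertex) _ _
    refine ⟨b', fun i => ?_, ?_⟩
    · induction i using Fin.lastCases with
      | last =>
        change Near (b 4) (b' 4)
        rw [hb_last]
        simpa using near_swap _ _ (near_chase (b 4).swap (shadow t p').swap)
      | cast i =>
        rcases lt_trichotomy i t with hi | rfl | hi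
        · rw [hb_lt i hi, hj i hi]
          exact near_shadow i p p' hp
        · rw [hb_t]
          exact near_chase _ _
        · simpa [b', hi.not_gt, hi.ne'] using near_refl _
    · have h_next : ∀ σ : Equiv.Perm (Fin 5), (∀ i : Fin 4, i < t → σ i.castSucc = i.castSucc) →
          b' (σ t.castSucc) = shadow t p' →
          ∃ (σ : Equiv.Perm (Fin 5)) (m : ℕ),
            (m < 15 * (4 - (t : ℕ)) + (chaseRank (b t.castSucc) (shadow t p) +
              chaseRank (b 4).swap (shadow t p).swap) ∨ m = 0) ∧ Holds m (b' ∘ σ) p' := by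
        intro σ hσ hσt
        have h_held : ∀ i : Fin 4, (i : ℕ) < t + 1 → (b' ∘ σ) i.castSucc = shadow i p' := by
          intro i hi
          rcases (Nat.lt_succ_iff.1 hi).eq_or_lt with hi | hi
          · obtain rfl : i = t := Fin.ext hi
            exact hσt
          · rw [Function.comp_apply, hσ i hi]
            exact hb_lt i hi
        obtain ⟨m, hm, h⟩ := exists_holds (by omega) h_held
        exact ⟨σ, m, by omega, h⟩
      rcases chaseRank_pair (c := b t.castSucc) (d := b 4) ht with h | h | h
      · exact h_next 1 (fun _ _ => rfl) (hb_t.trans h)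
      · refine h_next (Equiv.swap t.castSucc 4) (fun i hi => ?_) ?_
        · refine Equiv.swap_apply_of_ne_of_ne ?_ (Fin.castSucc_lt_last i).ne
          simpa using hi.ne
        · rw [Equiv.swap_apply_left, hb_last, h]
      · refine ⟨1, _, Or.inl ?_, t, fun i hi => hb_lt i hi, Or.inr ⟨t, rfl, rfl⟩⟩
        simp only [Function.comp_apply, Equiv.Perm.coe_one, id, hb_t, hb_last, Prod.swap_swap]
        omega

lemma bodyguardsWin_five : BodyguardsWin grid 5 := by
  refine bodyguardsWin_of_rank (fun n bs p => ∃ σ : Equiv.Perm (Fin 5), Holds n (bs ∘ σ) p)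
    ?_ ?_ ?_
  · intro bs p
    obtain ⟨n, -, h⟩ := exists_holds (Nat.zero_le 4) (b := bs) (p := p)
      fun i hi => absurd hi (Nat.not_lt_zero _)
    exact ⟨n, 1, h⟩
  · rintro bs p ⟨σ, j, hj, ⟨rfl, -⟩ | ⟨t, rfl, h⟩⟩ v hv
    · obtain ⟨i, rfl⟩ := exists_shadow_eq hv
      exact ⟨_, hj i i.2⟩
    · omega
  · rintro n bs p p' ⟨σ, h⟩ hp
    obtain ⟨b', hb, τ, m, hm, h⟩ := h.move (stepRel_iff_near.1 hp)
    refine ⟨b' ∘ σ.symm, fun i => stepRel_iff_near.2 ?_, m, hm, τ.trans σ, ?_⟩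
    · simpa using hb (σ.symm i)
    · convert h using 1
      ext1 i
      simp

/-- The four vertices of degree `4`. -/
def Central (p : Vertex) : Prop := (p.1 = 1 ∨ p.1 = 2) ∧ (p.2 = 1 ∨ p.2 = 2)

instance : DecidablePred Central := fun _ => inferInstanceAs (Decidable (_ ∧ _))

lemma adj_shadow {p : Vertex} (hp : Central p) (i : Fin 4) : grid.Adj p (shadow i p) := by
  have h : ∀ p, Central p → ∀ i, Near p (shadow i p) ∧ p ≠ shadow i p := by decide +kernel
  exact (stepRel_iff_near.2 (h p hp i).1).resolve_left (h p hp i).2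

lemma shadow_injective {p : Vertex} (hp : Central p) : Function.Injective (shadow · p) := by
  have h : ∀ p, Central p → ∀ i j, shadow i p = shadow j p → i = j := by decide +kernel
  exact fun i j => h p hp i j

lemma exists_matching {k : ℕ} {bs : Fin k → Vertex} {p : Vertex} (hp : Central p)
    (h : CanSurround grid bs p) :
    ∃ τ : Fin 4 → Fin k, Function.Injective τ ∧ ∀ i, Near (bs (τ i)) (shadow i p) := by
  obtain ⟨bs', hstep, hs⟩ := h
  choose τ hτ using fun i => hs _ (adj_shadow hp i)
  refine ⟨τ, fun i j hij => shadow_injective hp ?_, fun i => ?_⟩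
  · change shadow i p = shadow j p
    rw [← hτ i, ← hτ j, hij]
  · rw [← hτ i]
    exact stepRel_iff_near.1 (hstep _)

/-- A guard at `x` is at most one step away from a neighbour of `q`. -/
def Useful (x q : Vertex) : Prop := ∃ v, Near x (shadow v q)

instance : DecidableRel Useful := fun _ _ => inferInstanceAs (Decidable (∃ _, _))

/-- Any two neighbours of `q` can be reached in one step by two different guards. -/
def Matchable (c : Fin 4 → Vertex) (q : Vertex) : Prop :=
  ∀ v w, v < w → ∃ i, Near (c i) (shadow v q) ∧ ∃ j, j ≠ i ∧ Near (c j) (shadow w q)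

instance (c : Fin 4 → Vertex) : DecidablePred (Matchable c) :=
  fun _ => inferInstanceAs (Decidable (∀ _ _, _ → _))

lemma matchable_of_canSurround {c : Fin 4 → Vertex} {q : Vertex} (hq : Central q)
    (h : CanSurround grid c q) : (∀ i, Useful (c i) q) ∧ Matchable c q := by
  obtain ⟨τ, hinj, hτ⟩ := exists_matching hq h
  refine ⟨fun i => ?_, fun v w hvw => ⟨τ v, hτ v, τ w, hinj.ne hvw.ne', hτ w⟩⟩
  obtain ⟨v, rfl⟩ := (Finite.injective_iff_surjective.1 hinj) i
  exact ⟨v, hτ v⟩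

lemma eq_shadow_of_matchable (p : Vertex) (hp : Central p) (c : Fin 4 → Vertex)
    (hc : ∀ i, Near (c i) (shadow i p))
    (h1 : (∀ i, Useful (c i) (p.1.rev, p.2)) ∧ Matchable c (p.1.rev, p.2))
    (h2 : (∀ i, Useful (c i) (p.1, p.2.rev)) ∧ Matchable c (p.1, p.2.rev)) (i : Fin 4) :
    c i = shadow i p := by
  let Candidate (i : Fin 4) (p x : Vertex) : Prop :=
    Near x (shadow i p) ∧ Useful x (p.1.rev, p.2) ∧ Useful x (p.1, p.2.rev)
  have h_all : ∀ p : Vertex, Central p → ∀ x, Candidate 0 p x → ∀ y, Candidate 1 p y →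
      ∀ z, Candidate 2 p z → ∀ w, Candidate 3 p w →
      Matchable ![x, y, z, w] (p.1.rev, p.2) → Matchable ![x, y, z, w] (p.1, p.2.rev) →
      ∀ i : Fin 4, ![x, y, z, w] i = shadow i p := by
    decide +kernel
  have h_cand : ∀ i, Candidate i p (c i) := fun i => ⟨hc i, h1.1 i, h2.1 i⟩
  have h_cons : c = ![c 0, c 1, c 2, c 3] := by
    ext1 i
    fin_cases i <;> rfl
  have h := h_all p hp _ (h_cand 0) _ (h_cand 1) _ (h_cand 2) _ (h_cand 3)
  rw [← h_cons] at h
  exact h h1.2 h2.2 i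

lemma central_rev : ∀ p, Central p → Central (p.1.rev, p.2) ∧ Central (p.1, p.2.rev) ∧
    Near p (p.1.rev, p.2) ∧ Near p (p.1, p.2.rev) := by
  decide +kernel

lemma exists_eq_shadow {bs : Fin 4 → Vertex} {p : Vertex} (hp : Central p)
    (h : ∀ q, Near p q → Central q → CanSurround grid bs q) :
    ∃ τ : Equiv.Perm (Fin 4), ∀ i, bs (τ i) = shadow i p := by
  obtain ⟨τ, hinj, hτ⟩ := exists_matching hp (h p (near_refl p) hp)
  let e : Equiv.Perm (Fin 4) := Equiv.ofBijective τ (Finite.injective_iff_bijective.1 hinj)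
  have h_comp : ∀ q, Near p q → Central q →
      (∀ i, Useful ((bs ∘ e) i) q) ∧ Matchable (bs ∘ e) q := by
    intro q hpq hq
    obtain ⟨bs', hstep, hs⟩ := h q hpq hq
    refine matchable_of_canSurround hq ⟨bs' ∘ e, fun i => hstep _, fun v hv => ?_⟩
    obtain ⟨i, hi⟩ := hs v hv
    exact ⟨e.symm i, by simpa using hi⟩
  obtain ⟨hc1, hc2, hn1, hn2⟩ := central_rev p hp
  exact ⟨e, eq_shadow_of_matchable p hp (bs ∘ e) hτ (h_comp _ hn1 hc1) (h_comp _ hn2 hc2)⟩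

lemma not_bodyguardsWin_of_lt_four {k : ℕ} (hk : k < 4) : ¬ BodyguardsWin grid k := by
  have h : ∀ (bs : Fin k → Vertex) p, Central p → ¬ CanSurround grid bs p := by
    intro bs p hp hs
    obtain ⟨τ, hinj, -⟩ := exists_matching hp hs
    have := Fintype.card_le_of_injective τ hinj
    simp only [Fintype.card_fin] at this
    omega
  have h11 : Central (1, 1) := by decide
  exact not_bodyguardsWin_of_evasion Central (fun bs => ⟨_, h11, h bs _ h11⟩)
    fun bs p hp _ => ⟨p, Or.inl rfl, hp, h bs p hp⟩

lemma not_bodyguardsWin_four : ¬ BodyguardsWin grid 4 := by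
  refine not_bodyguardsWin_of_evasion Central (fun bs => ?_) fun bs p hp hs => ?_
  · by_contra! h
    obtain ⟨τ, hτ⟩ := exists_eq_shadow (p := (1, 1)) (by decide) fun q _ hq => h q hq
    obtain ⟨σ, hσ⟩ := exists_eq_shadow (p := (2, 2)) (by decide) fun q _ hq => h q hq
    have h_ne : ∀ i, shadow i (1, 1) ≠ shadow 0 (2, 2) := by decide
    refine h_ne (τ.symm (σ 0)) ?_
    rw [← hτ, ← hσ, Equiv.apply_symm_apply]
  · by_contra! h
    obtain ⟨τ, hτ⟩ := exists_eq_shadow hp fun q hpq hq => h q (stepRel_iff_near.2 hpq) hq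
    refine hs fun v hv => ?_
    obtain ⟨i, rfl⟩ := exists_shadow_eq hv
    exact ⟨τ i, hτ i⟩

end Grid

/-- `B(P_4 □ P_4) = 5`: the `4 × 4` grid graph has bodyguard number `5`. -/
theorem bodyguardNumber_pathGraph_four_boxProd :
    bodyguardNumber (SimpleGraph.pathGraph 4 □ SimpleGraph.pathGraph 4) = 5 := by
  refine le_antisymm (Nat.sInf_le Grid.bodyguardsWin_five)
    (le_csInf ⟨5, Grid.bodyguardsWin_five⟩ fun k hk => ?_)
  by_contra! h
  rcases (Nat.lt_succ_iff.1 h).eq_or_lt with rfl | h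
  · exact Grid.not_bodyguardsWin_four hk
  · exact Grid.not_bodyguardsWin_of_lt_four h hk
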